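/- Let 0 ≤ p < 1. The map H̃(A, B) = (1-p) ∫₀¹ (λA + (1-λ)B)^{-p} dλ is jointly convex on pairs of n×n positive definite complex matrices (in the Loewner order), and for positive real scalars s ≠ t (i.e., 1×1 matrices) it satisfies H̃(s, t) = (t^{1-p} − s^{1-p})/(t − s), while H̃(t, t) = (1-p)t^{-p}. Thus the function H(s,t) = (t^{1-p}−s^{1-p})/(t−s) for s ≠ t, H(t,t) = (1-p)t^{-p}, extends to a jointly convex map on pairs of positive definite matrices. -/

import Mathlib

open Matrix MeasureTheory
open scoped ComplexOrder

attribute [local instance] Matrix.normedAddCommGroup Matrix.normedSpace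

/-- Matrix power by a real exponent via the functional calculus
(unitary diagonalization for Hermitian matrices; junk value otherwise). -/
noncomputable def mpow {n : ℕ} (A : Matrix (Fin n) (Fin n) ℂ) (q : ℝ) :
    Matrix (Fin n) (Fin n) ℂ :=
  if hA : A.IsHermitian then
    (hA.eigenvectorUnitary : Matrix (Fin n) (Fin n) ℂ) *
      Matrix.diagonal (fun i => ((hA.eigenvalues i ^ q : ℝ) : ℂ)) *
      (star (hA.eigenvectorUnitary : Matrix (Fin n) (Fin n) ℂ))
  else 0

/-- `H̃(A,B) = (1-p) ∫₀¹ (λA + (1-λ)B)^{-p} dλ`. -/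
noncomputable def Hmap {n : ℕ} (p : ℝ) (A B : Matrix (Fin n) (Fin n) ℂ) :
    Matrix (Fin n) (Fin n) ℂ :=
  (1 - p) • ∫ l in Set.Icc (0 : ℝ) 1, mpow (l • A + (1 - l) • B) (-p)

/-!
Operator concavity of `a ↦ a ^ p` and the fact that inversion is antitone and convex make
`a ↦ a ^ (-p) = (a ^ p)⁻¹` operator convex for `0 ≤ p ≤ 1`. For each `λ` the matrix
`λ A + (1 - λ) B` depends linearly on the pair `(A, B)`, so `(λ A + (1 - λ) B) ^ (-p)` is jointly
convex, and integrating over `λ` preserves this because the Loewner cone is closed. On scalar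
matrices the integral is that of a real power along a segment.
-/

section CStarAlgebra

variable {A : Type*} [CStarAlgebra A] [PartialOrder A] [StarOrderedRing A]

lemma convexOn_rpow_neg_isStrictlyPositive {p : ℝ} (hp : p ∈ Set.Icc 0 1) :
    ConvexOn ℝ {a : A | IsStrictlyPositive a} (fun a => a ^ (-p)) := by
  have convex_pos : Convex ℝ {a : A | IsStrictlyPositive a} :=
    CStarAlgebra.convexOn_ringInverse.1
  obtain rfl | hp0 := eq_or_ne p 0
  · refine (convexOn_const 1 convex_pos).congr fun a ha => ?_
    rw [neg_zero, CFC.rpow_zero a ha.nonneg]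
  refine ⟨convex_pos, fun a ha b hb x y hx hy hxy => ?_⟩
  have hab : IsStrictlyPositive (x • a + y • b) := convex_pos ha hb hx hy hxy
  have hab_rpow : IsStrictlyPositive (x • a ^ p + y • b ^ p) :=
    convex_pos (ha.rpow a p) (hb.rpow b p) hx hy hxy
  calc (x • a + y • b) ^ (-p)
      = Ring.inverse ((x • a + y • b) ^ p) := (CFC.inverse_rpow _ p hp0 hab).symm
    _ ≤ Ring.inverse (x • a ^ p + y • b ^ p) :=
        CStarAlgebra.ringInverse_le_ringInverse
          ((CFC.concaveOn_rpow hp).2 ha.nonneg hb.nonneg hx hy hxy) hab_rpow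
    _ ≤ x • Ring.inverse (a ^ p) + y • Ring.inverse (b ^ p) :=
        CStarAlgebra.convexOn_ringInverse.2 (ha.rpow a p) (hb.rpow b p) hx hy hxy
    _ = x • a ^ (-p) + y • b ^ (-p) := by
        rw [CFC.inverse_rpow a p hp0 ha, CFC.inverse_rpow b p hp0 hb]

end CStarAlgebra

lemma convexOn_setIntegral_segment {E F : Type*} [AddCommGroup E] [Module ℝ E]
    [TopologicalSpace E] [ContinuousAdd E] [ContinuousSMul ℝ E]
    [NormedAddCommGroup F] [NormedSpace ℝ F] [PartialOrder F] [IsOrderedAddMonoid F]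
    [IsOrderedModule ℝ F] [ClosedIciTopology F] {μ : Measure ℝ} [IsFiniteMeasureOnCompacts μ]
    {f : E → F} {S : Set E} (hf : ConvexOn ℝ S f) (hc : ContinuousOn f S) :
    ConvexOn ℝ (S ×ˢ S)
      (fun x : E × E => ∫ l in Set.Icc (0 : ℝ) 1, f (l • x.1 + (1 - l) • x.2) ∂μ) := by
  have segment_mem : ∀ l ∈ Set.Icc (0 : ℝ) 1, ∀ x ∈ S ×ˢ S, l • x.1 + (1 - l) • x.2 ∈ S :=
    fun l hl x hx => hf.1 hx.1 hx.2 hl.1 (sub_nonneg.2 hl.2) (add_sub_cancel _ _)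
  refine integral_convexOn_of_integrand_ae (hf.1.prod hf.1) ?_ fun x hx => ?_
  · filter_upwards [ae_restrict_mem measurableSet_Icc] with l hl
    exact (hf.comp_linearMap
      (l • LinearMap.fst ℝ E E + (1 - l) • LinearMap.snd ℝ E E)).subset
        (segment_mem l hl) (hf.1.prod hf.1)
  · refine ContinuousOn.integrableOn_compact isCompact_Icc ?_
    exact hc.comp (by fun_prop) fun l hl => segment_mem l hl x hx

lemma mpow_eq_cfc {n : ℕ} {A : Matrix (Fin n) (Fin n) ℂ} (hA : A.IsHermitian) (q : ℝ) :
    mpow A q = cfc (fun r : ℝ => r ^ q) A := by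
  rw [hA.cfc_eq, mpow, dif_pos hA, Matrix.IsHermitian.cfc, Unitary.conjStarAlgAut_apply]
  rfl

lemma mpow_smul_one {n : ℕ} (s q : ℝ) :
    mpow (s • (1 : Matrix (Fin n) (Fin n) ℂ)) q = (s ^ q) • 1 := by
  have hs : (s • (1 : Matrix (Fin n) (Fin n) ℂ)).IsHermitian :=
    isHermitian_one.smul (.all s)
  rw [mpow_eq_cfc hs, ← Algebra.algebraMap_eq_smul_one, cfc_algebraMap,
    Algebra.algebraMap_eq_smul_one]

section MatrixPower

open scoped MatrixOrder Matrix.Norms.L2Operator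

variable {n : ℕ}

lemma mpow_eq_rpow {A : Matrix (Fin n) (Fin n) ℂ} (hA : A.PosSemidef) (q : ℝ) :
    mpow A q = A ^ q := by
  rw [mpow_eq_cfc hA.1, CFC.rpow_eq_cfc_real hA.nonneg]

lemma convexOn_mpow_neg {p : ℝ} (hp : p ∈ Set.Icc 0 1) :
    ConvexOn ℝ {A : Matrix (Fin n) (Fin n) ℂ | A.PosDef} (fun A => mpow A (-p)) := by
  simp only [← isStrictlyPositive_iff_posDef]
  exact (convexOn_rpow_neg_isStrictlyPositive hp).congr fun A hA =>
    (mpow_eq_rpow (isStrictlyPositive_iff_posDef.1 hA).posSemidef (-p)).symm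

lemma continuousOn_mpow (q : ℝ) :
    ContinuousOn (fun A : Matrix (Fin n) (Fin n) ℂ => mpow A q) {A | A.PosDef} := by
  simp only [← isStrictlyPositive_iff_posDef]
  exact (CFC.continuousOn_rpow q).congr fun A hA =>
    mpow_eq_rpow (isStrictlyPositive_iff_posDef.1 hA).posSemidef q

end MatrixPower

-- Instance search does not identify the topology of the entrywise norm, which the integral in
-- `Hmap` uses, with the product topology on matrices, so the former is spelled out.
open scoped MatrixOrder in
lemma closedIciTopology_matrix {m : Type*} [Fintype m] :
    @ClosedIciTopology (Matrix m m ℂ) PseudoMetricSpace.toUniformSpace.toTopologicalSpace _ := by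
  classical
  let : CStarAlgebra (Matrix m m ℂ) := Matrix.instCStarAlgebra
  exact inferInstanceAs (ClosedIciTopology (Matrix m m ℂ))

open scoped MatrixOrder in
lemma convexOn_Hmap {n : ℕ} {p : ℝ} (hp : p ∈ Set.Icc 0 1) :
    ConvexOn ℝ ({A : Matrix (Fin n) (Fin n) ℂ | A.PosDef} ×ˢ {B | B.PosDef})
      (fun X => Hmap p X.1 X.2) :=
  have := closedIciTopology_matrix (m := Fin n)
  (convexOn_setIntegral_segment (convexOn_mpow_neg hp) (continuousOn_mpow (-p))).smul
    (sub_nonneg.2 hp.2)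

lemma Hmap_self {n : ℕ} (p : ℝ) (A : Matrix (Fin n) (Fin n) ℂ) :
    Hmap p A A = (1 - p) • mpow A (-p) := by
  simp [Hmap, ← add_smul]

lemma integral_segment_rpow {q s t : ℝ} (hs : 0 < s) (ht : 0 < t) (hst : s ≠ t) (hq : q ≠ -1) :
    ∫ l in (0 : ℝ)..1, (l * s + (1 - l) * t) ^ q =
      (t ^ (q + 1) - s ^ (q + 1)) / ((q + 1) * (t - s)) := by
  have hts : s - t ≠ 0 := sub_ne_zero.2 hst
  have zero_notMem : (0 : ℝ) ∉ Set.uIcc t s := Set.notMem_uIcc_of_lt ht hs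
  calc ∫ l in (0 : ℝ)..1, (l * s + (1 - l) * t) ^ q
      = ∫ l in (0 : ℝ)..1, ((s - t) * l + t) ^ q := by
        congr! 3
        ring
    _ = (s - t)⁻¹ * ∫ x in t..s, x ^ q := by
        rw [intervalIntegral.integral_comp_mul_add (fun x : ℝ => x ^ q) hts]
        simp only [mul_zero, zero_add, mul_one, sub_add_cancel, smul_eq_mul]
    _ = (s - t)⁻¹ * ((s ^ (q + 1) - t ^ (q + 1)) / (q + 1)) := by
        rw [integral_rpow (Or.inr ⟨hq, zero_notMem⟩)]
    _ = (t ^ (q + 1) - s ^ (q + 1)) / ((q + 1) * (t - s)) := by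
        rw [← neg_sub s t, ← neg_sub (s ^ _)]
        field_simp

lemma Hmap_smul_one_smul_one {n : ℕ} (p s t : ℝ) :
    Hmap p (s • (1 : Matrix (Fin n) (Fin n) ℂ)) (t • 1) =
      ((1 - p) * ∫ l in (0 : ℝ)..1, (l * s + (1 - l) * t) ^ (-p)) • 1 := by
  simp only [Hmap, smul_smul, ← add_smul, mpow_smul_one]
  rw [integral_smul_const, integral_Icc_eq_integral_Ioc,
    intervalIntegral.integral_of_le zero_le_one, smul_smul]

lemma Hmap_smul_one_smul_one_of_ne {n : ℕ} {p s t : ℝ} (hp : p ≠ 1) (hs : 0 < s) (ht : 0 < t)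
    (hst : s ≠ t) :
    Hmap p (s • (1 : Matrix (Fin n) (Fin n) ℂ)) (t • 1) =
      ((t ^ (1 - p) - s ^ (1 - p)) / (t - s)) • 1 := by
  have hp' : 1 - p ≠ 0 := sub_ne_zero.2 hp.symm
  rw [Hmap_smul_one_smul_one, integral_segment_rpow hs ht hst (by grind), neg_add_eq_sub,
    ← mul_div_assoc, mul_div_mul_left _ _ hp']

theorem stmt7 (p : ℝ) (hp0 : 0 ≤ p) (hp1 : p < 1) :
    (∀ (n : ℕ) (A₁ A₂ B₁ B₂ : Matrix (Fin n) (Fin n) ℂ),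
      A₁.PosDef → A₂.PosDef → B₁.PosDef → B₂.PosDef →
      ∀ α : ℝ, 0 ≤ α → α ≤ 1 →
      ((α • Hmap p A₁ B₁ + (1 - α) • Hmap p A₂ B₂) -
        Hmap p (α • A₁ + (1 - α) • A₂) (α • B₁ + (1 - α) • B₂)).PosSemidef) ∧
    (∀ s t : ℝ, 0 < s → 0 < t → s ≠ t →
      Hmap p (s • (1 : Matrix (Fin 1) (Fin 1) ℂ)) (t • 1) =
        ((t ^ (1 - p) - s ^ (1 - p)) / (t - s)) • 1) ∧
    (∀ t : ℝ, 0 < t →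
      Hmap p (t • (1 : Matrix (Fin 1) (Fin 1) ℂ)) (t • 1) =
        ((1 - p) * t ^ (-p)) • 1) := by
  refine ⟨fun n A₁ A₂ B₁ B₂ hA₁ hA₂ hB₁ hB₂ α hα0 hα1 => ?_,
    fun s t hs ht hst => Hmap_smul_one_smul_one_of_ne hp1.ne hs ht hst, fun t _ => ?_⟩
  · have jointly_convex := (convexOn_Hmap ⟨hp0, hp1.le⟩).2
      (Set.mk_mem_prod hA₁ hB₁) (Set.mk_mem_prod hA₂ hB₂) hα0 (sub_nonneg.2 hα1)
      (add_sub_cancel α 1)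
    exact Matrix.le_iff.1 jointly_convex
  · rw [Hmap_self, mpow_smul_one, smul_smul]
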